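/- Let ρ ≥ 1 be a Steiner ratio bound. Let (S, α) be an instance of Min-3CSG with primary colors {r, b, y} such that S_rby = S_r ∩ S_b ∩ S_y is nonempty, let (S, E*) be a colored spanning graph for (S, α), and for each nonempty γ ⊆ {r,b,y} let E*_γ = {e ∈ E* : α(e) = γ}. Let H be a minimum spanning tree of S_rby. Then w(H) ≤ w(E*_rby) + ρ · (w(E*_y) + w(E*_by) + w(E*_ry)). -/

import Mathlib

/-!
Delete from the yellow part of `Estar` the edges of color `rby`. In each connected component `C` of
what remains, the black points of `C` can be joined to each other by a minimum spanning tree whose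
weight is at most `ρ` times the weight of the remaining edges in `C`, by the Steiner ratio bound
(`exists_steiner_replacement`). The union of these trees and of the `rby` edges connects all black
points: a yellow path between black points splits at its `rby` edges, whose endpoints are black,
into pieces that each stay within one component. A connected edge set contains a spanning tree
(`exists_spanningTree`), so it weighs at least as much as the minimum spanning tree `H`.
-/

open scoped BigOperators

namespace MCSG

noncomputable section

/-- Points in the plane. -/
abbrev Pt : Type := EuclideanSpace ℝ (Fin 2)

noncomputable instance : DecidableEq Pt := Classical.decEq _

/-- Euclidean length of an edge (unordered pair of points). -/
def edgeWeight : Sym2 Pt → ℝ :=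
  Sym2.lift ⟨fun p q => dist p q, fun p q => dist_comm p q⟩

/-- Total weight of an edge set. -/
def totalWeight (E : Finset (Sym2 Pt)) : ℝ := ∑ e ∈ E, edgeWeight e

/-- The color of an edge: the common primary colors of its endpoints. -/
def edgeColor {k : ℕ} (α : Pt → Finset (Fin k)) : Sym2 Pt → Finset (Fin k) :=
  Sym2.lift ⟨fun p q => α p ∩ α q, fun p q => Finset.inter_comm _ _⟩

/-- `E` is a set of edges on the vertex set `S` (no loops). -/
def EdgesOn (S : Finset Pt) (E : Finset (Sym2 Pt)) : Prop :=
  ∀ e ∈ E, ¬ e.IsDiag ∧ ∀ p ∈ e, p ∈ S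

/-- One step in the subgraph of the edge set `E` induced by the vertex set `V`. -/
def AdjIn (V : Set Pt) (E : Finset (Sym2 Pt)) (p q : Pt) : Prop :=
  p ∈ V ∧ q ∈ V ∧ p ≠ q ∧ s(p, q) ∈ E

/-- Reachability in the subgraph of `E` induced by `V`. -/
def ReachIn (V : Set Pt) (E : Finset (Sym2 Pt)) : Pt → Pt → Prop :=
  Relation.ReflTransGen (AdjIn V E)

/-- The subgraph of `E` induced by `V` is connected. -/
def ConnOn (V : Finset Pt) (E : Finset (Sym2 Pt)) : Prop :=
  ∀ p ∈ V, ∀ q ∈ V, ReachIn (↑V) E p q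

/-- The set `S_c` of points of `S` having primary color `c`. -/
def Sc {k : ℕ} (S : Finset Pt) (α : Pt → Finset (Fin k)) (c : Fin k) : Finset Pt :=
  S.filter fun p => c ∈ α p

/-- `(S, E)` is a colored spanning graph for the instance `(S, α)`. -/
def IsCSG {k : ℕ} (S : Finset Pt) (α : Pt → Finset (Fin k)) (E : Finset (Sym2 Pt)) : Prop :=
  EdgesOn S E ∧ ∀ c : Fin k, ConnOn (Sc S α c) E

/-- `(S, E)` is a minimum colored spanning graph for `(S, α)`. -/
def IsMinCSG {k : ℕ} (S : Finset Pt) (α : Pt → Finset (Fin k)) (E : Finset (Sym2 Pt)) : Prop :=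
  IsCSG S α E ∧ ∀ E' : Finset (Sym2 Pt), IsCSG S α E' → totalWeight E ≤ totalWeight E'

/-- `T` is a spanning tree of (the complete graph on) the point set `P`. -/
def IsSpanningTreeOn (P : Finset Pt) (T : Finset (Sym2 Pt)) : Prop :=
  EdgesOn P T ∧ ConnOn P T ∧ T.card + 1 = P.card

/-- `T` is a minimum spanning tree of the point set `P`. -/
def IsMST (P : Finset Pt) (T : Finset (Sym2 Pt)) : Prop :=
  IsSpanningTreeOn P T ∧ ∀ T', IsSpanningTreeOn P T' → totalWeight T ≤ totalWeight T'

/-- Restricted coloring `α_γ`. -/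
def restrictColor {k : ℕ} (γ : Finset (Fin k)) (α : Pt → Finset (Fin k)) : Pt → Finset (Fin k) :=
  fun p => α p ∩ γ

/-- Restricted point set `S_γ`. -/
def Sγ {k : ℕ} (S : Finset Pt) (α : Pt → Finset (Fin k)) (γ : Finset (Fin k)) : Finset Pt :=
  S.filter fun p => (α p ∩ γ).Nonempty

/-- `ρ` is a Steiner ratio bound. -/
def SteinerRatioBound (ρ : ℝ) : Prop :=
  ∀ P Q : Finset Pt, P.Nonempty → P ⊆ Q →
    ∀ T : Finset (Sym2 Pt), EdgesOn Q T → ConnOn Q T →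
      ∀ M : Finset (Sym2 Pt), IsMST P M → totalWeight M ≤ ρ * totalWeight T

end


lemma edgeWeight_nonneg (e : Sym2 Pt) : 0 ≤ edgeWeight e := by
  induction e with
  | _ a b => exact dist_nonneg (x := a) (y := b)

lemma totalWeight_nonneg (E : Finset (Sym2 Pt)) : 0 ≤ totalWeight E :=
  Finset.sum_nonneg fun e _ => edgeWeight_nonneg e

lemma totalWeight_mono {E F : Finset (Sym2 Pt)} (h : E ⊆ F) : totalWeight E ≤ totalWeight F :=
  Finset.sum_le_sum_of_subset_of_nonneg h fun e _ _ => edgeWeight_nonneg e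

lemma totalWeight_union_le (E F : Finset (Sym2 Pt)) :
    totalWeight (E ∪ F) ≤ totalWeight E + totalWeight F := by
  have h := Finset.sum_union_inter (s₁ := E) (s₂ := F) (f := edgeWeight)
  have h0 := totalWeight_nonneg (E ∩ F)
  unfold totalWeight at *
  linarith

lemma AdjIn.symm {V : Set Pt} {E : Finset (Sym2 Pt)} {p q : Pt} (h : AdjIn V E p q) :
    AdjIn V E q p :=
  ⟨h.2.1, h.1, h.2.2.1.symm, by rw [Sym2.eq_swap]; exact h.2.2.2⟩

lemma ReachIn.symm {V : Set Pt} {E : Finset (Sym2 Pt)} {p q : Pt} (h : ReachIn V E p q) :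
    ReachIn V E q p := by
  induction h with
  | refl => exact Relation.ReflTransGen.refl
  | tail _ hbc ih => exact Relation.ReflTransGen.head hbc.symm ih

lemma ReachIn.mono {V W : Set Pt} {E F : Finset (Sym2 Pt)} (hV : V ⊆ W) (hE : E ⊆ F) {p q : Pt}
    (h : ReachIn V E p q) : ReachIn W F p q := by
  induction h with
  | refl => exact Relation.ReflTransGen.refl
  | tail _ h ih => exact ih.tail ⟨hV h.1, hV h.2.1, h.2.2.1, hE h.2.2.2⟩

/-- A walk that leaves the set `U` has an edge crossing its boundary. -/
lemma exists_crossing {V : Set Pt} {E : Finset (Sym2 Pt)} {U : Finset Pt} {u v : Pt}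
    (h : ReachIn V E u v) (hu : u ∈ U) (hv : v ∉ U) :
    ∃ a ∈ U, ∃ b, b ∉ U ∧ AdjIn V E a b := by
  induction h with
  | refl => exact absurd hu hv
  | @tail b c _ hbc ih =>
    by_cases hb : b ∈ U
    · exact ⟨b, hb, c, hv, hbc⟩
    · exact ih hb

/-- A connected edge set contains a subtree on `n + 1` vertices for every admissible `n`,
grown one boundary edge at a time. -/
lemma exists_subtree {P : Finset Pt} {E : Finset (Sym2 Pt)} (hE : ConnOn P E) (n : ℕ)
    (hn : n + 1 ≤ P.card) :
    ∃ U ⊆ P, U.card = n + 1 ∧ ∃ T ⊆ E, IsSpanningTreeOn U T := by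
  induction n with
  | zero =>
    obtain ⟨p, hp⟩ := Finset.card_pos.1 hn
    refine ⟨{p}, by simpa using hp, by simp, ∅, by simp, ?_, ?_, by simp⟩
    · intro e he
      simp at he
    · intro a ha b hb
      rw [Finset.mem_singleton] at ha hb
      subst ha hb
      exact Relation.ReflTransGen.refl
  | succ n ih =>
    obtain ⟨U, hUP, hU, T, hTE, hT1, hT2, hT3⟩ := ih (by omega)
    obtain ⟨u, hu⟩ := Finset.card_pos.1 (show 0 < U.card by omega)
    obtain ⟨v, hv, hvU⟩ := Finset.exists_mem_notMem_of_card_lt_card (show U.card < P.card by omega)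
    obtain ⟨a, ha, b, hb, hab⟩ := exists_crossing (hE u (hUP hu) v hv) hu hvU
    have hnew : s(a, b) ∉ T := fun h => hb ((hT1 _ h).2 b (by simp))
    have hlift : ∀ {x y}, ReachIn (↑U) T x y → ReachIn (↑(insert b U)) (insert s(a, b) T) x y :=
      fun h => h.mono (by simp) (by simp)
    have hadj : AdjIn (↑(insert b U)) (insert s(a, b) T) a b :=
      ⟨by simp [ha], by simp, hab.2.2.1, by simp⟩
    have hroot : ∀ x ∈ insert b U, ReachIn (↑(insert b U)) (insert s(a, b) T) a x := by
      intro x hx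
      rcases Finset.mem_insert.1 hx with rfl | hx
      · exact Relation.ReflTransGen.single hadj
      · exact hlift (hT2 a ha x hx)
    refine ⟨insert b U, ?_, ?_, insert s(a, b) T, ?_, ?_, ?_, ?_⟩
    · exact Finset.insert_subset hab.2.1 hUP
    · rw [Finset.card_insert_of_notMem hb, hU]
    · exact Finset.insert_subset hab.2.2.2 hTE
    · intro e he
      rcases Finset.mem_insert.1 he with rfl | he
      · refine ⟨by simpa using hab.2.2.1, fun p hp => ?_⟩
        rcases Sym2.mem_iff.1 hp with rfl | rfl
        · simp [ha]
        · simp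
      · exact ⟨(hT1 e he).1, fun p hp => Finset.mem_insert_of_mem ((hT1 e he).2 p hp)⟩
    · exact fun x hx y hy => (hroot x hx).symm.trans (hroot y hy)
    · rw [Finset.card_insert_of_notMem hnew, Finset.card_insert_of_notMem hb, hT3]

lemma exists_spanningTree {P : Finset Pt} {E : Finset (Sym2 Pt)} (hP : P.Nonempty)
    (hE : ConnOn P E) : ∃ T ⊆ E, IsSpanningTreeOn P T := by
  have hc := hP.card_pos
  obtain ⟨U, hUP, hU, T, hTE, hT⟩ := exists_subtree hE (P.card - 1) (by omega)
  obtain rfl := Finset.eq_of_subset_of_card_le hUP (by omega)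
  exact ⟨T, hTE, hT⟩

lemma exists_MST {P : Finset Pt} (hP : P.Nonempty) : ∃ M, IsMST P M := by
  classical
  have hmem : ∀ T, IsSpanningTreeOn P T → T ∈ P.sym2.powerset := by
    intro T hT
    rw [Finset.mem_powerset]
    exact fun e he => Finset.mem_sym2_iff.2 (hT.1 e he).2
  have hconn : ConnOn P P.sym2 := by
    intro p hp q hq
    by_cases h : p = q
    · subst h
      exact Relation.ReflTransGen.refl
    · exact Relation.ReflTransGen.single ⟨hp, hq, h, by simp [hp, hq]⟩
  obtain ⟨T, _, hT⟩ := exists_spanningTree hP hconn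
  obtain ⟨M, hM, hmin⟩ := Finset.exists_min_image
    (P.sym2.powerset.filter (IsSpanningTreeOn P)) totalWeight
    ⟨T, Finset.mem_filter.2 ⟨hmem T hT, hT⟩⟩
  exact ⟨M, (Finset.mem_filter.1 hM).2,
    fun T' hT' => hmin T' (Finset.mem_filter.2 ⟨hmem T' hT', hT'⟩)⟩

/-- The Steiner ratio bound for a possibly disconnected graph: the points of `P` that `T` connects
can be connected without Steiner points at `ρ` times the cost. The components of `T` are split off
one at a time. -/
lemma exists_steiner_replacement {ρ : ℝ} (hρ : 1 ≤ ρ) (hst : SteinerRatioBound ρ) (n : ℕ) :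
    ∀ P Q : Finset Pt, Q.card ≤ n → P ⊆ Q → ∀ T : Finset (Sym2 Pt), EdgesOn Q T →
      ∃ M : Finset (Sym2 Pt), totalWeight M ≤ ρ * totalWeight T ∧
        ∀ p ∈ P, ∀ q ∈ P, ReachIn (↑Q) T p q → ReachIn (↑P) M p q := by
  classical
  induction n with
  | zero =>
    intro P Q hQ hPQ T hT
    refine ⟨∅, ?_, fun p hp => ?_⟩
    · have := mul_nonneg (zero_le_one.trans hρ) (totalWeight_nonneg T)
      simpa [totalWeight] using this
    · have := Finset.card_pos.2 ⟨p, hPQ hp⟩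
      omega
  | succ n ih =>
    intro P Q hQ hPQ T hT
    rcases Q.eq_empty_or_nonempty with rfl | ⟨o, ho⟩
    · exact ih P ∅ (by simp) hPQ T hT
    -- `C` is the vertex set of the component of `o`
    set C := Q.filter fun x => ReachIn (↑Q) T o x with hC
    have hCQ : C ⊆ Q := Finset.filter_subset _ _
    have hoC : o ∈ C := Finset.mem_filter.2 ⟨ho, Relation.ReflTransGen.refl⟩
    have hstep : ∀ {x y}, AdjIn (↑Q) T x y → x ∈ C → y ∈ C := fun h hx =>
      Finset.mem_filter.2 ⟨h.2.1, (Finset.mem_filter.1 hx).2.tail h⟩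
    set T₁ := T.filter fun e => ∀ x ∈ e, x ∈ C with hT₁
    set T₂ := T.filter fun e => ¬ ∀ x ∈ e, x ∈ C with hT₂
    have hw : totalWeight T₁ + totalWeight T₂ = totalWeight T :=
      Finset.sum_filter_add_sum_filter_not T _ _
    have hin : ∀ {x y}, ReachIn (↑Q) T x y → x ∈ C → y ∈ C ∧ ReachIn (↑C) T₁ x y := by
      intro x y h hx
      induction h with
      | refl => exact ⟨hx, Relation.ReflTransGen.refl⟩
      | @tail b c _ hbc ih' =>
        have hc := hstep hbc ih'.1
        refine ⟨hc, ih'.2.tail ⟨ih'.1, hc, hbc.2.2.1, Finset.mem_filter.2 ⟨hbc.2.2.2, ?_⟩⟩⟩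
        intro z hz
        rcases Sym2.mem_iff.1 hz with rfl | rfl
        · exact ih'.1
        · exact hc
    have hout : ∀ {x y}, ReachIn (↑Q) T x y → x ∉ C →
        y ∉ C ∧ ReachIn (↑(Q \ C)) T₂ x y := by
      intro x y h hx
      induction h with
      | refl => exact ⟨hx, Relation.ReflTransGen.refl⟩
      | @tail b c _ hbc ih' =>
        have hc : c ∉ C := fun hc => ih'.1 (hstep hbc.symm hc)
        refine ⟨hc, ih'.2.tail ⟨Finset.mem_sdiff.2 ⟨hbc.1, ih'.1⟩,
          Finset.mem_sdiff.2 ⟨hbc.2.1, hc⟩, hbc.2.2.1, Finset.mem_filter.2 ⟨hbc.2.2.2, ?_⟩⟩⟩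
        exact fun h => hc (h c (by simp))
    have hE₁ : EdgesOn C T₁ := fun e he =>
      ⟨(hT e (Finset.mem_filter.1 he).1).1, (Finset.mem_filter.1 he).2⟩
    have hE₂ : EdgesOn (Q \ C) T₂ := by
      intro e he
      obtain ⟨heT, hne⟩ := Finset.mem_filter.1 he
      refine ⟨(hT e heT).1, fun x hx => Finset.mem_sdiff.2 ⟨(hT e heT).2 x hx, fun hxC => hne ?_⟩⟩
      intro y hy
      by_cases hxy : x = y
      · exact hxy ▸ hxC
      · have hexy : e = s(x, y) := (Sym2.mem_and_mem_iff hxy).1 ⟨hx, hy⟩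
        exact hstep ⟨(hT e heT).2 x hx, (hT e heT).2 y hy, hxy, hexy ▸ heT⟩ hxC
    have hconn : ConnOn C T₁ := fun x hx y hy =>
      (hin ((Finset.mem_filter.1 hx).2.symm.trans (Finset.mem_filter.1 hy).2) hx).2
    obtain ⟨M₂, hM₂w, hM₂⟩ := ih (P \ C) (Q \ C)
      (by
        have := Finset.card_lt_card (Finset.sdiff_ssubset hCQ ⟨o, hoC⟩)
        omega)
      (Finset.sdiff_subset_sdiff hPQ le_rfl) T₂ hE₂
    have hcomp : ∃ M₁ : Finset (Sym2 Pt), totalWeight M₁ ≤ ρ * totalWeight T₁ ∧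
        ConnOn (P ∩ C) M₁ := by
      rcases (P ∩ C).eq_empty_or_nonempty with h | h
      · refine ⟨∅, ?_, fun p hp => by simp [h] at hp⟩
        have := mul_nonneg (zero_le_one.trans hρ) (totalWeight_nonneg T₁)
        simpa [totalWeight] using this
      · obtain ⟨M, hM⟩ := exists_MST h
        exact ⟨M, hst _ C h Finset.inter_subset_right T₁ hE₁ hconn M hM, hM.1.2.1⟩
    obtain ⟨M₁, hM₁w, hM₁⟩ := hcomp
    refine ⟨M₁ ∪ M₂, ?_, fun p hp q hq hpq => ?_⟩
    · have := totalWeight_union_le M₁ M₂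
      rw [← hw]
      linarith
    · by_cases hpC : p ∈ C
      · have hqC := (hin hpq hpC).1
        exact (hM₁ p (Finset.mem_inter.2 ⟨hp, hpC⟩) q (Finset.mem_inter.2 ⟨hq, hqC⟩)).mono
          (Finset.coe_subset.2 Finset.inter_subset_left) Finset.subset_union_left
      · obtain ⟨hqC, hr⟩ := hout hpq hpC
        exact (hM₂ p (Finset.mem_sdiff.2 ⟨hp, hpC⟩) q (Finset.mem_sdiff.2 ⟨hq, hqC⟩) hr).mono
          (Finset.coe_subset.2 Finset.sdiff_subset) Finset.subset_union_right

/-- The subsets of the three primary colors that contain color `2`. -/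
lemma color_cases (c : Finset (Fin 3)) (h : 2 ∈ c) :
    c = {0, 1, 2} ∨ c = {2} ∨ c = {1, 2} ∨ c = {0, 2} := by
  revert c
  decide

/-- with colors r = 0, b = 1, y = 2, an MST `H` of the black points
`S_rby` satisfies `w(H) ≤ w(E*_rby) + ρ·(w(E*_y) + w(E*_by) + w(E*_ry))` for any CSG `(S, E*)`,
where `ρ` is a Steiner ratio bound. -/
theorem MST_of_black_points_bound (ρ : ℝ) (hρ : 1 ≤ ρ) (hst : SteinerRatioBound ρ)
    (S : Finset Pt) (α : Pt → Finset (Fin 3))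
    (hα : ∀ p ∈ S, (α p).Nonempty)
    (hrby : (Sc S α 0 ∩ Sc S α 1 ∩ Sc S α 2).Nonempty)
    (Estar : Finset (Sym2 Pt)) (hEstar : IsCSG S α Estar)
    (H : Finset (Sym2 Pt)) (hH : IsMST (Sc S α 0 ∩ Sc S α 1 ∩ Sc S α 2) H) :
    totalWeight H ≤
      totalWeight (Estar.filter fun e => edgeColor α e = ({0, 1, 2} : Finset (Fin 3)))
      + ρ * (totalWeight (Estar.filter fun e => edgeColor α e = ({2} : Finset (Fin 3)))
           + totalWeight (Estar.filter fun e => edgeColor α e = ({1, 2} : Finset (Fin 3)))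
           + totalWeight (Estar.filter fun e => edgeColor α e = ({0, 2} : Finset (Fin 3)))) := by
  classical
  set B := Sc S α 0 ∩ Sc S α 1 ∩ Sc S α 2 with hB
  set R := Estar.filter fun e => edgeColor α e = ({0, 1, 2} : Finset (Fin 3)) with hR
  set Y := Estar.filter fun e => edgeColor α e = ({2} : Finset (Fin 3)) with hY
  set BY := Estar.filter fun e => edgeColor α e = ({1, 2} : Finset (Fin 3)) with hBY
  set RY := Estar.filter fun e => edgeColor α e = ({0, 2} : Finset (Fin 3)) with hRY
  set T := Y ∪ BY ∪ RY with hT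
  have hBS : B ⊆ Sc S α 2 := Finset.inter_subset_right
  have hTmem : ∀ e ∈ T, e ∈ Estar ∧ 2 ∈ edgeColor α e := by
    intro e he
    simp only [hT, hY, hBY, hRY, Finset.mem_union, Finset.mem_filter] at he
    rcases he with (⟨h, hc⟩ | ⟨h, hc⟩) | ⟨h, hc⟩ <;> exact ⟨h, by simp [hc]⟩
  have hTon : EdgesOn (Sc S α 2) T := by
    intro e he
    obtain ⟨heE, hc⟩ := hTmem e he
    refine ⟨(hEstar.1 e heE).1, fun p hp => Finset.mem_filter.2 ⟨(hEstar.1 e heE).2 p hp, ?_⟩⟩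
    induction e with
    | _ a b =>
      have hc' : 2 ∈ α a ∩ α b := hc
      rcases Sym2.mem_iff.1 hp with rfl | rfl
      · exact (Finset.mem_inter.1 hc').1
      · exact (Finset.mem_inter.1 hc').2
  obtain ⟨M, hMw, hM⟩ := exists_steiner_replacement hρ hst _ B (Sc S α 2) le_rfl hBS T hTon
  have hblack : ∀ {x}, x ∈ S → ({0, 1, 2} : Finset (Fin 3)) ⊆ α x → x ∈ B := by
    intro x hx h
    simp only [hB, Sc, Finset.mem_inter, Finset.mem_filter]
    exact ⟨⟨⟨hx, h (by simp)⟩, hx, h (by simp)⟩, hx, h (by simp)⟩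
  -- `b` is the last black point of the walk after which no `rby` edge has been used
  have key : ∀ p ∈ B, ∀ x, ReachIn (↑(Sc S α 2)) Estar p x →
      ∃ b ∈ B, ReachIn (↑B) (M ∪ R) p b ∧ ReachIn (↑(Sc S α 2)) T b x := by
    intro p hp x h
    induction h with
    | refl => exact ⟨p, hp, Relation.ReflTransGen.refl, Relation.ReflTransGen.refl⟩
    | @tail x z _ hxz ih =>
      obtain ⟨b, hb, hpb, hbx⟩ := ih
      obtain ⟨hx, hz, hne, he⟩ := hxz
      obtain ⟨hxS, hx2⟩ := Finset.mem_filter.1 hx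
      obtain ⟨hzS, hz2⟩ := Finset.mem_filter.1 hz
      rcases color_cases (α x ∩ α z) (Finset.mem_inter.2 ⟨hx2, hz2⟩) with h | h
      · have hxB := hblack hxS (h ▸ Finset.inter_subset_left)
        have hzB := hblack hzS (h ▸ Finset.inter_subset_right)
        have h1 : ReachIn (↑B) (M ∪ R) b x :=
          (hM b hb x hxB hbx).mono subset_rfl Finset.subset_union_left
        have hRe : s(x, z) ∈ R := Finset.mem_filter.2 ⟨he, h⟩
        exact ⟨z, hzB, (hpb.trans h1).tail ⟨hxB, hzB, hne, Finset.mem_union_right _ hRe⟩,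
          Relation.ReflTransGen.refl⟩
      · have hTe : s(x, z) ∈ T := by
          simp only [hT, hY, hBY, hRY, Finset.mem_union, Finset.mem_filter]
          rcases h with h | h | h
          · exact Or.inl (Or.inl ⟨he, h⟩)
          · exact Or.inl (Or.inr ⟨he, h⟩)
          · exact Or.inr ⟨he, h⟩
        exact ⟨b, hb, hpb, hbx.tail ⟨hx, hz, hne, hTe⟩⟩
  have hconn : ConnOn B (M ∪ R) := by
    intro p hp q hq
    obtain ⟨b, hb, hpb, hbq⟩ := key p hp q (hEstar.2 2 p (hBS hp) q (hBS hq))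
    exact hpb.trans ((hM b hb q hq hbq).mono subset_rfl Finset.subset_union_left)
  obtain ⟨T', hT'sub, hT'⟩ := exists_spanningTree hrby hconn
  have hTw : totalWeight T ≤ totalWeight Y + totalWeight BY + totalWeight RY := by
    have h1 := totalWeight_union_le (Y ∪ BY) RY
    have h2 := totalWeight_union_le Y BY
    linarith
  calc totalWeight H ≤ totalWeight T' := hH.2 T' hT'
    _ ≤ totalWeight (M ∪ R) := totalWeight_mono hT'sub
    _ ≤ totalWeight M + totalWeight R := totalWeight_union_le M R
    _ ≤ totalWeight R + ρ * (totalWeight Y + totalWeight BY + totalWeight RY) := by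
      have := mul_le_mul_of_nonneg_left hTw (zero_le_one.trans hρ)
      linarith

end MCSG
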